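/- (Lower-tail concentration of Gaussian maxima.) Let N ≥ 1, let Σ' ∈ ℝ^{N×N} be positive semidefinite with all diagonal entries at most 1, let v* > 0, and let Z = (Z_1, …, Z_N) be a centered Gaussian vector with covariance matrix v* · Σ'. Then for every η > 0, P[ max_{1≤j≤N} Z_j < E[ max_{1≤j≤N} Z_j ] − η ] ≤ exp( −η² / (2 v*) ). -/

import Mathlib

/-!
The proof is a Chernoff bound. Write `Z = A G` with `G` standard Gaussian and let `M(x)` be the
maximum of the coordinates of `A x`; since the rows of `A` have squared norm at most `v*`, the
function `M` is Lipschitz with constant `√v*`. What has to be shown is the sharp sub-Gaussian bound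
`log 𝔼 exp (-s M) ≤ -s 𝔼 M + s² v* / 2` for `s ≥ 0`, after which `s = η / v*` gives the claim.

The sharp constant comes from the midpoint Prékopa–Leindler inequality for the Gaussian measure
(`prekopa_leindler_gaussian`): if `u x * v y ≤ w ((x + y) / 2)² * exp (|x - y|² / 4)` for all `x`, `y`,
then `∫ u * ∫ v ≤ (∫ w)²`. Applied to `u = exp (-s M)`, `v = 1` and
`w = exp (-s M / 2 + s² v* / 8)`, it yields (`mgf_neg_iSup_le_sq`)
`𝔼 exp (-s M) ≤ (𝔼 exp (-s M / 2))² * exp (s² v* / 4)`.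
Iterating this halving of `s` (`cgf_le_of_halving`), the error terms add up to
`s² v* / 4 * (1 + 1/2 + 1/4 + ⋯) = s² v* / 2`, while `(𝔼 exp (-s M / 2^k))^(2^k)` tends to
`exp (-s 𝔼 M)`.

The Prékopa–Leindler inequality itself is proved on the line from the one-dimensional
Brunn–Minkowski inequality through superlevel sets, transferred to the Gaussian weight, and
tensorized by induction on the dimension.
-/

open MeasureTheory ProbabilityTheory Matrix Filter

/-- The standard Gaussian measure on `ι → ℝ`: i.i.d. standard normal coordinates. -/
noncomputable def stdGaussian (ι : Type*) [Fintype ι] : Measure (ι → ℝ) :=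
  Measure.pi (fun _ : ι => gaussianReal 0 1)

/-- `μ` is the law of a centered Gaussian vector with covariance matrix `C`:
the law of `A • g` for a standard Gaussian `g`, where `A Aᵀ = C`. -/
def IsCenteredGaussianCov {ι : Type*} [Fintype ι] [DecidableEq ι]
    (μ : Measure (ι → ℝ)) (C : Matrix ι ι ℝ) : Prop :=
  ∃ A : Matrix ι ι ℝ, A * Aᵀ = C ∧ μ = (stdGaussian ι).map (fun g => A.mulVec g)

open scoped ENNReal

/-! ### The Prékopa–Leindler inequality on the line -/

lemma volume_preimage_midpoint (A : Set ℝ) (c : ℝ) :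
    volume ((fun x => (x + c) / 2) ⁻¹' A) = 2 * volume A := by
  have h : ((fun x : ℝ => (x + c) / 2) ⁻¹' A)
      = (fun x => x + c) ⁻¹' ((fun x => x * (2 : ℝ)⁻¹) ⁻¹' A) := by
    ext x; simp [div_eq_mul_inv]
  rw [h, measure_preimage_add_right, Real.volume_preimage_mul_right (by norm_num)]
  simp

/-- Two affine copies of half size sit in `C` and meet in at most one point: `(K + min L) / 2` lies
to the left of `(max K + min L) / 2`, and `(max K + L) / 2` to the right of it. -/
lemma brunn_minkowski_compact {K L C : Set ℝ} (hK : IsCompact K) (hL : IsCompact L)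
    (hK0 : K.Nonempty) (hL0 : L.Nonempty)
    (h : ∀ a ∈ K, ∀ b ∈ L, (a + b) / 2 ∈ C) :
    volume K + volume L ≤ 2 * volume C := by
  obtain ⟨k, hkK, hk⟩ := hK.exists_isGreatest hK0
  obtain ⟨l, hlL, hl⟩ := hL.exists_isLeast hL0
  set m := (k + l) / 2 with hm
  have hKk : volume K ≤ 2 * volume (C ∩ Set.Iio m) := by
    rw [← volume_preimage_midpoint _ l, ← measure_sdiff_null (measure_singleton k)]
    refine measure_mono fun x hx => ⟨h x hx.1 l hlL, ?_⟩
    have h1 : x < k := lt_of_le_of_ne (hk hx.1) hx.2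
    simp only [Set.mem_Iio, hm]
    linarith
  have hLl : volume L ≤ 2 * volume (C \ Set.Iio m) := by
    rw [← volume_preimage_midpoint _ k]
    refine measure_mono fun x hx => ⟨by simpa only [add_comm k x] using h k hkK x hx, ?_⟩
    have h1 : l ≤ x := hl hx
    simp only [Set.mem_Iio, hm, not_lt]
    linarith
  calc volume K + volume L ≤ 2 * volume (C ∩ Set.Iio m) + 2 * volume (C \ Set.Iio m) := by gcongr
    _ = 2 * volume C := by rw [← mul_add, measure_inter_add_sdiff _ measurableSet_Iio]

/-- One-dimensional Brunn–Minkowski inequality for midpoints. The set `C` contains `(A + B) / 2`;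
no measurability of `C` is needed. -/
lemma brunn_minkowski_real {A B C : Set ℝ} (hA : MeasurableSet A) (hB : MeasurableSet B)
    (hA0 : A.Nonempty) (hB0 : B.Nonempty)
    (h : ∀ a ∈ A, ∀ b ∈ B, (a + b) / 2 ∈ C) :
    volume A + volume B ≤ 2 * volume C := by
  obtain ⟨a₀, ha₀⟩ := hA0
  obtain ⟨b₀, hb₀⟩ := hB0
  rw [hA.measure_eq_iSup_isCompact, hB.measure_eq_iSup_isCompact]
  simp_rw [iSup_and']
  refine ENNReal.biSup_add_biSup_le' ⟨∅, by simp⟩ ⟨∅, by simp⟩ fun K hK L hL => ?_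
  -- Adjoining a point makes the compact sets nonempty.
  calc volume K + volume L ≤ volume (insert a₀ K) + volume (insert b₀ L) := by
        gcongr <;> exact Set.subset_insert _ _
    _ ≤ 2 * volume C := by
        refine brunn_minkowski_compact (hK.2.insert a₀) (hL.2.insert b₀)
          (Set.insert_nonempty _ _) (Set.insert_nonempty _ _) fun a ha b hb => h a ?_ b ?_
        · exact Set.insert_subset ha₀ hK.1 ha
        · exact Set.insert_subset hb₀ hL.1 hb

lemma lintegral_eq_lintegral_meas_lt_of_le_one {u : ℝ → ℝ≥0∞} (hu : Measurable u)
    (hu1 : ∀ x, u x ≤ 1) :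
    ∫⁻ x, u x = ∫⁻ t in Set.Ioi (0 : ℝ), volume {x | ENNReal.ofReal t < u x} := by
  have h1 : ∀ x, u x ≠ ∞ := fun x => ((hu1 x).trans_lt ENNReal.one_lt_top).ne
  have := lintegral_eq_lintegral_meas_lt (f := fun x => (u x).toReal) volume
    (Eventually.of_forall fun x => ENNReal.toReal_nonneg) hu.ennreal_toReal.aemeasurable
  simp only [ENNReal.ofReal_toReal (h1 _)] at this
  rw [this]
  refine setLIntegral_congr_fun measurableSet_Ioi fun t ht => ?_
  simp only [← ENNReal.ofReal_lt_iff_lt_toReal (le_of_lt ht) (h1 _)]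

/-- When `u` and `v` have the same supremum, their superlevel sets at each level are nonempty together,
so Brunn–Minkowski applies level by level and yields an arithmetic mean on the left. -/
lemma prekopa_leindler_normalized {u v w : ℝ → ℝ≥0∞} (hu : Measurable u) (hv : Measurable v)
    (hw : Measurable w) (hu1 : ⨆ x, u x = 1) (hv1 : ⨆ x, v x = 1)
    (h : ∀ x y, u x * v y ≤ w ((x + y) / 2) ^ 2) :
    (∫⁻ x, u x) + ∫⁻ x, v x ≤ 2 * ∫⁻ x, w x := by
  have hu1' : ∀ x, u x ≤ 1 := fun x => hu1 ▸ le_iSup u x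
  have hv1' : ∀ x, v x ≤ 1 := fun x => hv1 ▸ le_iSup v x
  calc (∫⁻ x, u x) + ∫⁻ x, v x ≤ 2 * ∫⁻ x, min (w x) 1 := ?_
    _ ≤ 2 * ∫⁻ x, w x := by gcongr; exact min_le_left _ _
  rw [lintegral_eq_lintegral_meas_lt_of_le_one hu hu1',
    lintegral_eq_lintegral_meas_lt_of_le_one hv hv1',
    lintegral_eq_lintegral_meas_lt_of_le_one (hw.min measurable_const) (fun x => min_le_right _ _),
    ← lintegral_const_mul' _ _ (by simp), ← lintegral_add_left]
  · refine setLIntegral_mono' measurableSet_Ioi fun t ht => ?_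
    rcases lt_or_ge t 1 with ht1 | ht1
    · have ht1' : ENNReal.ofReal t < 1 := by simpa using ht1
      refine brunn_minkowski_real (measurableSet_lt measurable_const hu)
        (measurableSet_lt measurable_const hv)
        (lt_iSup_iff.1 (hu1.symm ▸ ht1' : ENNReal.ofReal t < ⨆ x, u x))
        (lt_iSup_iff.1 (hv1.symm ▸ ht1' : ENNReal.ofReal t < ⨆ x, v x)) fun a ha b hb => ?_
      refine lt_min ?_ ht1'
      have h2 : ENNReal.ofReal t ^ 2 < w ((a + b) / 2) ^ 2 := by
        rw [sq]
        exact (ENNReal.mul_lt_mul ha hb).trans_le (h a b)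
      exact lt_of_pow_lt_pow_left' 2 h2
    · have ht1' : 1 ≤ ENNReal.ofReal t := by simpa using ht1
      have e1 : {x | ENNReal.ofReal t < u x} = ∅ := by
        ext x; simpa using (hu1' x).trans ht1'
      have e2 : {x | ENNReal.ofReal t < v x} = ∅ := by
        ext x; simpa using (hv1' x).trans ht1'
      simp [e1, e2]
  · refine Antitone.measurable fun s t hst => measure_mono fun x hx => ?_
    exact (ENNReal.ofReal_le_ofReal hst).trans_lt hx

lemma ENNReal_mul_le_of_two_mul {a b c : ℝ≥0∞} (h : a + b ≤ 2 * c) : a * b ≤ c ^ 2 := by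
  rcases eq_or_ne c ∞ with rfl | hc
  · simp
  have hab : a + b ≠ ∞ := (h.trans_lt (ENNReal.mul_lt_top (by simp) hc.lt_top)).ne
  obtain ⟨ha, hb⟩ := ENNReal.add_ne_top.1 hab
  lift a to NNReal using ha
  lift b to NNReal using hb
  lift c to NNReal using hc
  norm_cast at h ⊢
  have h' : (a : ℝ) + b ≤ 2 * c := by exact_mod_cast h
  have : (a : ℝ) * b ≤ c ^ 2 := by nlinarith [sq_nonneg ((a : ℝ) - b), a.2, b.2, c.2]
  exact_mod_cast this

/-- Rescaling `u`, `v`, `w` by `sup u`, `sup v` and the geometric mean of the two reduces to the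
normalized case. -/
lemma prekopa_leindler_bounded {u v w : ℝ → ℝ≥0∞} (hu : Measurable u) (hv : Measurable v)
    (hw : Measurable w) (hu1 : ⨆ x, u x ≠ ∞) (hv1 : ⨆ x, v x ≠ ∞)
    (h : ∀ x y, u x * v y ≤ w ((x + y) / 2) ^ 2) :
    (∫⁻ x, u x) * ∫⁻ x, v x ≤ (∫⁻ x, w x) ^ 2 := by
  set a := ⨆ x, u x with ha
  set b := ⨆ x, v x with hb
  rcases eq_or_ne a 0 with ha0 | ha0
  · have : ∀ x, u x = 0 := by simpa [ha] using ha0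
    simp [this]
  rcases eq_or_ne b 0 with hb0 | hb0
  · have : ∀ x, v x = 0 := by simpa [hb] using hb0
    simp [this]
  set c : ℝ≥0∞ := (a * b) ^ (1 / 2 : ℝ) with hc
  have hc2 : c ^ 2 = a * b := by
    rw [hc, ← ENNReal.rpow_natCast, ← ENNReal.rpow_mul]; simp
  have hab : a * b ≠ ∞ := ENNReal.mul_ne_top hu1 hv1
  have hab0 : a * b ≠ 0 := mul_ne_zero ha0 hb0
  have hinv : a⁻¹ * b⁻¹ = (c⁻¹) ^ 2 := by
    rw [← ENNReal.inv_pow, hc2, ENNReal.mul_inv (Or.inl ha0) (Or.inl hu1)]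
  have key := prekopa_leindler_normalized (hu.const_mul a⁻¹) (hv.const_mul b⁻¹)
    (hw.const_mul c⁻¹)
    (by rw [← ENNReal.mul_iSup, ← ha, ENNReal.inv_mul_cancel ha0 hu1])
    (by rw [← ENNReal.mul_iSup, ← hb, ENNReal.inv_mul_cancel hb0 hv1])
    (fun x y => by
      calc a⁻¹ * u x * (b⁻¹ * v y) = (a⁻¹ * b⁻¹) * (u x * v y) := by ring
        _ ≤ (a⁻¹ * b⁻¹) * w ((x + y) / 2) ^ 2 := by gcongr; exact h x y
        _ = _ := by rw [hinv, mul_pow])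
  rw [lintegral_const_mul _ hu, lintegral_const_mul _ hv, lintegral_const_mul _ hw] at key
  have key2 := ENNReal_mul_le_of_two_mul key
  have key3 : (a * b) * ((a⁻¹ * ∫⁻ x, u x) * (b⁻¹ * ∫⁻ x, v x))
      ≤ (a * b) * (c⁻¹ * ∫⁻ x, w x) ^ 2 := by gcongr
  rw [mul_pow, ← hinv] at key3
  have e : (a * b) * (a⁻¹ * b⁻¹) = 1 := by
    rw [← ENNReal.mul_inv (Or.inl ha0) (Or.inl hu1), ENNReal.mul_inv_cancel hab0 hab]
  calc (∫⁻ x, u x) * ∫⁻ x, v x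
      = ((a * b) * (a⁻¹ * b⁻¹)) * ((∫⁻ x, u x) * ∫⁻ x, v x) := by rw [e, one_mul]
    _ = (a * b) * ((a⁻¹ * ∫⁻ x, u x) * (b⁻¹ * ∫⁻ x, v x)) := by ring
    _ ≤ (a * b) * (a⁻¹ * b⁻¹ * (∫⁻ x, w x) ^ 2) := key3
    _ = (∫⁻ x, w x) ^ 2 := by rw [← mul_assoc, e, one_mul]

lemma lintegral_eq_iSup_min_nat {u : ℝ → ℝ≥0∞} (hu : Measurable u) :
    ∫⁻ x, u x = ⨆ n : ℕ, ∫⁻ x, min (u x) n := by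
  rw [← lintegral_iSup (fun n => hu.min measurable_const)
    (fun m n hmn x => min_le_min_left _ (by exact_mod_cast hmn))]
  refine lintegral_congr fun x => ?_
  rw [← inf_iSup_eq, ENNReal.iSup_natCast, inf_top_eq]

/-- Midpoint Prékopa–Leindler inequality for Lebesgue measure on `ℝ`, obtained from the bounded case
by truncating `u` and `v`. -/
lemma prekopa_leindler_real {u v w : ℝ → ℝ≥0∞} (hu : Measurable u) (hv : Measurable v)
    (hw : Measurable w) (h : ∀ x y, u x * v y ≤ w ((x + y) / 2) ^ 2) :
    (∫⁻ x, u x) * ∫⁻ x, v x ≤ (∫⁻ x, w x) ^ 2 := by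
  rw [lintegral_eq_iSup_min_nat hu, lintegral_eq_iSup_min_nat hv]
  simp_rw [ENNReal.iSup_mul, ENNReal.mul_iSup]
  refine iSup_le fun m => iSup_le fun n => ?_
  refine prekopa_leindler_bounded (hu.min measurable_const) (hv.min measurable_const) hw
    ?_ ?_ fun x y => ?_
  · exact ((iSup_le fun x => min_le_right _ _).trans_lt (ENNReal.natCast_lt_top m)).ne
  · exact ((iSup_le fun x => min_le_right _ _).trans_lt (ENNReal.natCast_lt_top n)).ne
  · exact (mul_le_mul' (min_le_left _ _) (min_le_left _ _)).trans (h x y)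

/-! ### The Prékopa–Leindler inequality for Gaussian measures -/

/-- The weight `exp ((x - y)² / 4)` is the defect `g((x + y) / 2)² / (g x * g y)` of the Gaussian
density `g`, so this is `prekopa_leindler_real` applied to `g * u`, `g * v`, `g * w`. -/
lemma prekopa_leindler_gaussianReal {u v w : ℝ → ℝ≥0∞} (hu : Measurable u) (hv : Measurable v)
    (hw : Measurable w)
    (h : ∀ x y, u x * v y
      ≤ w ((x + y) / 2) ^ 2 * ENNReal.ofReal (Real.exp ((x - y) ^ 2 / 4))) :
    (∫⁻ x, u x ∂gaussianReal 0 1) * ∫⁻ x, v x ∂gaussianReal 0 1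
      ≤ (∫⁻ x, w x ∂gaussianReal 0 1) ^ 2 := by
  have hg := measurable_gaussianPDF 0 1
  rw [gaussianReal_of_var_ne_zero 0 one_ne_zero, lintegral_withDensity_eq_lintegral_mul _ hg hu,
    lintegral_withDensity_eq_lintegral_mul _ hg hv, lintegral_withDensity_eq_lintegral_mul _ hg hw]
  refine prekopa_leindler_real (hg.mul hu) (hg.mul hv) (hg.mul hw) fun x y => ?_
  have key : gaussianPDF 0 1 x * gaussianPDF 0 1 y
      * ENNReal.ofReal (Real.exp ((x - y) ^ 2 / 4)) = gaussianPDF 0 1 ((x + y) / 2) ^ 2 := by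
    simp only [gaussianPDF]
    rw [← ENNReal.ofReal_mul (gaussianPDFReal_nonneg _ _ _),
      ← ENNReal.ofReal_mul (mul_nonneg (gaussianPDFReal_nonneg _ _ _) (gaussianPDFReal_nonneg _ _ _)),
      ← ENNReal.ofReal_pow (gaussianPDFReal_nonneg _ _ _)]
    congr 1
    simp only [gaussianPDFReal, NNReal.coe_one, mul_one, sub_zero]
    set c := (√(2 * Real.pi))⁻¹
    have : Real.exp (-x ^ 2 / 2) * Real.exp (-y ^ 2 / 2) * Real.exp ((x - y) ^ 2 / 4)
        = Real.exp (-((x + y) / 2) ^ 2 / 2) ^ 2 := by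
      rw [← Real.exp_add, ← Real.exp_add, ← Real.exp_nat_mul]
      congr 1; push_cast; ring
    linear_combination c ^ 2 * this
  calc (gaussianPDF 0 1 * u) x * (gaussianPDF 0 1 * v) y
      = gaussianPDF 0 1 x * gaussianPDF 0 1 y * (u x * v y) := by
        simp only [Pi.mul_apply]; ring
    _ ≤ gaussianPDF 0 1 x * gaussianPDF 0 1 y
        * (w ((x + y) / 2) ^ 2 * ENNReal.ofReal (Real.exp ((x - y) ^ 2 / 4))) := by
        exact mul_le_mul_right (h x y) _
    _ = (gaussianPDF 0 1 x * gaussianPDF 0 1 y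
        * ENNReal.ofReal (Real.exp ((x - y) ^ 2 / 4))) * w ((x + y) / 2) ^ 2 := by ring
    _ = (gaussianPDF 0 1 * w) ((x + y) / 2) ^ 2 := by
        rw [key]; simp only [Pi.mul_apply]; ring

lemma lintegral_pi_succ {n : ℕ} {f : (Fin (n + 1) → ℝ) → ℝ≥0∞} (hf : Measurable f) :
    ∫⁻ x, f x ∂Measure.pi (fun _ : Fin (n + 1) => gaussianReal 0 1)
      = ∫⁻ a, ∫⁻ x, f (Fin.cons a x) ∂Measure.pi (fun _ : Fin n => gaussianReal 0 1)
        ∂gaussianReal 0 1 := by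
  have h := (measurePreserving_piFinSuccAbove
    (fun _ : Fin (n + 1) => gaussianReal 0 1) 0).symm
  rw [← h.lintegral_comp hf, lintegral_prod]
  · simp [MeasurableEquiv.piFinSuccAbove, Fin.insertNthEquiv]
  · exact (hf.comp h.measurable).aemeasurable

lemma measurable_finCons {n : ℕ} :
    Measurable fun p : ℝ × (Fin n → ℝ) => (Fin.cons p.1 p.2 : Fin (n + 1) → ℝ) := by
  refine measurable_pi_iff.2 fun i => ?_
  refine Fin.cases ?_ (fun i => ?_) i
  · simpa using measurable_fst
  · exact (measurable_pi_apply i).comp measurable_snd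

/-- Midpoint Prékopa–Leindler inequality for the standard Gaussian measure on `ℝⁿ`, by induction on
the dimension: integrating out all coordinates but the first leaves three functions of one
variable that satisfy the hypothesis of the one-dimensional case. -/
theorem prekopa_leindler_gaussian (n : ℕ) {u v w : (Fin n → ℝ) → ℝ≥0∞}
    (hu : Measurable u) (hv : Measurable v) (hw : Measurable w)
    (h : ∀ x y, u x * v y ≤ w (fun i => (x i + y i) / 2) ^ 2
      * ENNReal.ofReal (Real.exp (∑ i, (x i - y i) ^ 2 / 4))) :
    (∫⁻ x, u x ∂Measure.pi (fun _ => gaussianReal 0 1))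
        * ∫⁻ x, v x ∂Measure.pi (fun _ => gaussianReal 0 1)
      ≤ (∫⁻ x, w x ∂Measure.pi (fun _ => gaussianReal 0 1)) ^ 2 := by
  induction n with
  | zero =>
    have h0 := h 0 0
    rw [Subsingleton.elim (fun i : Fin 0 => ((0 : Fin 0 → ℝ) i + (0 : Fin 0 → ℝ) i) / 2) 0] at h0
    simp only [Measure.pi_of_empty _ (0 : Fin 0 → ℝ), lintegral_dirac]
    simpa using h0
  | succ n ih =>
    rw [lintegral_pi_succ hu, lintegral_pi_succ hv, lintegral_pi_succ hw]
    have hsec : ∀ {f : (Fin (n + 1) → ℝ) → ℝ≥0∞}, Measurable f → ∀ a : ℝ,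
        Measurable fun x : Fin n → ℝ => f (Fin.cons a x) := fun hf a =>
      hf.comp (measurable_finCons.comp measurable_prodMk_left)
    have hint : ∀ {f : (Fin (n + 1) → ℝ) → ℝ≥0∞}, Measurable f → Measurable fun a : ℝ =>
        ∫⁻ x, f (Fin.cons a x) ∂Measure.pi (fun _ : Fin n => gaussianReal 0 1) := fun hf =>
      (hf.comp measurable_finCons).lintegral_prod_right'
    refine prekopa_leindler_gaussianReal (hint hu) (hint hv) (hint hw) fun a b => ?_
    set c : ℝ≥0∞ := ENNReal.ofReal (Real.exp ((a - b) ^ 2 / 8)) with hc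
    have hc2 : c ^ 2 = ENNReal.ofReal (Real.exp ((a - b) ^ 2 / 4)) := by
      rw [hc, ← ENNReal.ofReal_pow (Real.exp_nonneg _), ← Real.exp_nat_mul]
      congr 2; push_cast; ring
    -- The factor coming from the first coordinate is absorbed into the section of `w`.
    have := ih (hsec hu a) (hsec hv b) ((hsec hw ((a + b) / 2)).mul_const c) fun x y => by
      refine (h (Fin.cons a x) (Fin.cons b y)).trans (le_of_eq ?_)
      have e : (fun i => ((Fin.cons a x : Fin (n + 1) → ℝ) i
          + (Fin.cons b y : Fin (n + 1) → ℝ) i) / 2)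
          = (Fin.cons ((a + b) / 2) fun i => (x i + y i) / 2 : Fin (n + 1) → ℝ) := by
        ext i
        refine Fin.cases ?_ (fun i => ?_) i <;> simp
      rw [e, Fin.sum_univ_succ, Real.exp_add, ENNReal.ofReal_mul (Real.exp_nonneg _), mul_pow, hc2]
      simp only [Fin.cons_zero, Fin.cons_succ]
      ring
    rwa [lintegral_mul_const _ (hsec hw _), mul_pow, hc2] at this

/-! ### The maximum of linear forms in Gaussian variables -/

/-- The maximum of the linear forms `A x` is `√c`-Lipschitz; its increment from `x` to the midpoint
of `x` and `y` is absorbed by Young's inequality into `s² c / 4 + |x - y|² / 4`. -/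
lemma iSup_mulVec_sub_le {n : ℕ} [NeZero n] (A : Matrix (Fin n) (Fin n) ℝ) (c : ℝ)
    (hA : ∀ j, ∑ i, A j i ^ 2 ≤ c) {s : ℝ} (hs : 0 ≤ s) (x y : Fin n → ℝ) :
    s * (⨆ j, A.mulVec (fun i => (x i + y i) / 2) j)
      ≤ s * (⨆ j, A.mulVec x j) + s ^ 2 * c / 4 + ∑ i, (x i - y i) ^ 2 / 4 := by
  obtain ⟨j, hj⟩ := exists_eq_ciSup_of_finite
    (f := fun j => A.mulVec (fun i => (x i + y i) / 2) j)
  have h1 : A.mulVec x j ≤ ⨆ j, A.mulVec x j := le_ciSup (Set.finite_range _).bddAbove j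
  have h2 : s * (A.mulVec (fun i => (x i + y i) / 2) j - A.mulVec x j)
      ≤ s ^ 2 / 4 * ∑ i, A j i ^ 2 + ∑ i, (x i - y i) ^ 2 / 4 := by
    simp only [Matrix.mulVec, dotProduct]
    rw [← Finset.sum_sub_distrib, Finset.mul_sum, Finset.mul_sum, ← Finset.sum_add_distrib]
    refine Finset.sum_le_sum fun i _ => ?_
    -- The difference of the two sides is `(s * A j i + (x i - y i)) ^ 2 / 4`.
    nlinarith [sq_nonneg (s * A j i + (x i - y i))]
  rw [← hj]
  nlinarith [mul_le_mul_of_nonneg_left h1 hs, mul_le_mul_of_nonneg_left (hA j) (sq_nonneg s)]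

lemma measurable_iSup_mulVec {n : ℕ} (A : Matrix (Fin n) (Fin n) ℝ) :
    Measurable fun x : Fin n → ℝ => ⨆ j, A.mulVec x j := by
  refine Measurable.iSup fun j => ?_
  simp only [Matrix.mulVec, dotProduct]
  fun_prop

lemma integrable_exp_mul_iSup_mulVec {n : ℕ} [NeZero n] (A : Matrix (Fin n) (Fin n) ℝ) (t : ℝ) :
    Integrable (fun x => Real.exp (t * -(⨆ j, A.mulVec x j)))
      (Measure.pi fun _ : Fin n => gaussianReal 0 1) := by
  set c : Fin n → ℝ := fun i => |t| * ∑ j, |A j i| with hc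
  have hexp : ∀ r : ℝ, Integrable (fun x : ℝ => Real.exp (r * x)) (gaussianReal 0 1) := fun r => by
    have h : r ∈ integrableExpSet id (gaussianReal 0 1) := by
      rw [integrableExpSet_id_gaussianReal]; trivial
    exact h
  have hprod : Integrable (fun x : Fin n → ℝ => ∏ i, Real.exp (c i * |x i|))
      (Measure.pi fun _ : Fin n => gaussianReal 0 1) :=
    Integrable.fintype_prod (f := fun i (x : ℝ) => Real.exp (c i * |x|)) fun i =>
      integrable_exp_mul_abs (X := id) (hexp (c i)) (hexp (-c i))
  refine hprod.mono' ?_ (Eventually.of_forall fun x => ?_)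
  · refine Measurable.aestronglyMeasurable ?_
    have : Measurable fun x : Fin n → ℝ => ⨆ j, A.mulVec x j := measurable_iSup_mulVec A
    fun_prop
  · rw [Real.norm_eq_abs, Real.abs_exp, ← Real.exp_sum]
    refine Real.exp_le_exp.2 ?_
    obtain ⟨j, hj⟩ := exists_eq_ciSup_of_finite (f := fun j => A.mulVec x j)
    rw [← hj]
    calc t * -A.mulVec x j ≤ |t * -A.mulVec x j| := le_abs_self _
      _ = |t| * |∑ i, A j i * x i| := by rw [abs_mul, abs_neg]; rfl
      _ ≤ |t| * ∑ i, |A j i| * |x i| := by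
        gcongr
        refine (Finset.abs_sum_le_sum_abs _ _).trans (le_of_eq ?_)
        simp only [abs_mul]
      _ = ∑ i, |t| * |A j i| * |x i| := by
        rw [Finset.mul_sum]; simp only [mul_assoc]
      _ ≤ ∑ i, c i * |x i| := by
        refine Finset.sum_le_sum fun i _ => ?_
        rw [hc]
        dsimp only
        gcongr
        exact Finset.single_le_sum (f := fun j => |A j i|) (fun j _ => abs_nonneg _)
          (Finset.mem_univ j)

/-- Gaussian Prékopa–Leindler with `u = exp (-s M)`, `v = 1` and `w` a multiple of
`exp (-s M / 2)`, where `M` is the maximum of the linear forms. -/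
lemma mgf_neg_iSup_le_sq {n : ℕ} [NeZero n] (A : Matrix (Fin n) (Fin n) ℝ) (c : ℝ)
    (hA : ∀ j, ∑ i, A j i ^ 2 ≤ c) {s : ℝ} (hs : 0 ≤ s) :
    mgf (fun x => -(⨆ j, A.mulVec x j)) (Measure.pi fun _ : Fin n => gaussianReal 0 1) s
      ≤ mgf (fun x => -(⨆ j, A.mulVec x j)) (Measure.pi fun _ : Fin n => gaussianReal 0 1) (s / 2) ^ 2
        * Real.exp (s ^ 2 * c / 4) := by
  set γ := Measure.pi fun _ : Fin n => gaussianReal 0 1 with hγ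
  set f : (Fin n → ℝ) → ℝ := fun x => ⨆ j, A.mulVec x j with hf
  have hfm : Measurable f := measurable_iSup_mulVec A
  have hmgf : ∀ t, ENNReal.ofReal (mgf (fun x => -f x) γ t)
      = ∫⁻ x, ENNReal.ofReal (Real.exp (t * -f x)) ∂γ := fun t =>
    ofReal_integral_eq_lintegral_ofReal (integrable_exp_mul_iSup_mulVec A t)
      (Eventually.of_forall fun x => Real.exp_nonneg _)
  have key := prekopa_leindler_gaussian n
    (u := fun x => ENNReal.ofReal (Real.exp (s * -f x))) (v := fun _ => 1)
    (w := fun x => ENNReal.ofReal (Real.exp (s / 2 * -f x))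
      * ENNReal.ofReal (Real.exp (s ^ 2 * c / 8)))
    (by fun_prop) (by fun_prop) (by fun_prop) (fun x y => by
      rw [mul_one, ← ENNReal.ofReal_mul (Real.exp_nonneg _), ← Real.exp_add,
        ← ENNReal.ofReal_pow (Real.exp_nonneg _), ← Real.exp_nat_mul,
        ← ENNReal.ofReal_mul (Real.exp_nonneg _), ← Real.exp_add]
      refine ENNReal.ofReal_le_ofReal (Real.exp_le_exp.2 ?_)
      have := iSup_mulVec_sub_le A c hA hs x y
      push_cast
      simp only [hf]
      linarith)
  rw [lintegral_mul_const _ (by fun_prop), lintegral_one, measure_univ, mul_one, ← hγ, ← hmgf,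
    ← hmgf, ← ENNReal.ofReal_mul mgf_nonneg,
    ← ENNReal.ofReal_pow (mul_nonneg mgf_nonneg (Real.exp_nonneg _)),
    ENNReal.ofReal_le_ofReal_iff (by positivity), mul_pow, ← Real.exp_nat_mul] at key
  refine key.trans (le_of_eq ?_)
  congr 2
  push_cast
  ring

/-- The hypothesis says that `φ s = cgf X μ s - s² c / 2` satisfies `φ s ≤ 2 φ (s / 2)`. Iterating,
`φ s ≤ 2 ^ k * φ (s / 2 ^ k)`, which tends to `s * φ' 0 = s * 𝔼[X]`. -/
lemma cgf_le_of_halving {Ω : Type*} [MeasurableSpace Ω] (μ : Measure Ω) [IsProbabilityMeasure μ]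
    (X : Ω → ℝ) (c : ℝ) (hX : ∀ t, Integrable (fun ω => Real.exp (t * X ω)) μ)
    (h : ∀ s, 0 ≤ s → mgf X μ s ≤ mgf X μ (s / 2) ^ 2 * Real.exp (s ^ 2 * c / 4))
    {s : ℝ} (hs : 0 ≤ s) :
    cgf X μ s ≤ s * (∫ ω, X ω ∂μ) + s ^ 2 * c / 2 := by
  have h0 : (0 : ℝ) ∈ interior (integrableExpSet X μ) := by
    have : integrableExpSet X μ = Set.univ := Set.eq_univ_of_forall hX
    simp [this]
  set φ : ℝ → ℝ := fun t => cgf X μ t - t ^ 2 * c / 2 with hφ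
  have hhalf : ∀ t, 0 ≤ t → φ t ≤ 2 * φ (t / 2) := fun t ht => by
    have h1 := Real.log_le_log (mgf_pos (hX t)) (h t ht)
    rw [Real.log_mul (pow_pos (mgf_pos (hX _)) 2).ne' (Real.exp_ne_zero _), Real.log_pow,
      Real.log_exp] at h1
    simp only [hφ, cgf]
    push_cast at h1
    linarith
  have hiter : ∀ k : ℕ, φ s ≤ 2 ^ k * φ (s / 2 ^ k) := fun k => by
    induction k with
    | zero => simp
    | succ k ih =>
      refine ih.trans ?_
      have h1 := hhalf (s / 2 ^ k) (by positivity)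
      rw [pow_succ, mul_assoc, ← div_div]
      gcongr
  have hderiv : HasDerivAt φ (∫ ω, X ω ∂μ) 0 := by
    have h1 : HasDerivAt (cgf X μ) (∫ ω, X ω ∂μ) 0 := by
      have := (analyticAt_cgf h0).differentiableAt.hasDerivAt
      rwa [deriv_cgf_zero h0, probReal_univ, div_one] at this
    have h2 : HasDerivAt (fun t : ℝ => t ^ 2 * c / 2) 0 0 := by
      have := (((hasDerivAt_id (0 : ℝ)).pow 2).mul_const c).div_const 2
      simpa using this
    have h3 := h1.sub h2
    rw [sub_zero] at h3
    exact h3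
  have hφ0 : φ 0 = 0 := by simp [hφ]
  have hle : φ s ≤ s * ∫ ω, X ω ∂μ := by
    rcases hs.eq_or_lt with rfl | hs
    · simp [hφ0]
    have htend : Tendsto (fun k : ℕ => s / 2 ^ k) atTop (nhdsWithin 0 {0}ᶜ) := by
      refine tendsto_nhdsWithin_iff.2 ⟨?_, Eventually.of_forall fun k => ?_⟩
      · exact tendsto_const_nhds.div_atTop (tendsto_pow_atTop_atTop_of_one_lt one_lt_two)
      · simp only [Set.mem_compl_iff, Set.mem_singleton_iff]; positivity
    have hlim := (hderiv.tendsto_slope.comp htend).const_mul s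
    refine ge_of_tendsto' hlim fun k => (hiter k).trans (le_of_eq ?_)
    simp only [Function.comp, slope_def_field, hφ0, sub_zero]
    field_simp
  simp only [hφ] at hle
  linarith

/-- Lower-tail concentration of the maximum of a centered Gaussian vector whose
covariance is `v* • Sig`, with `Sig` positive semidefinite and unit-bounded diagonal. -/
theorem gaussian_max_lower_tail
    {Ω : Type*} [MeasurableSpace Ω] (P : Measure Ω) [IsProbabilityMeasure P]
    (N : ℕ) (hN : 1 ≤ N)
    (Sig : Matrix (Fin N) (Fin N) ℝ) (hpsd : Sig.PosSemidef) (hdiag : ∀ j, Sig j j ≤ 1)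
    (vstar : ℝ) (hv : 0 < vstar)
    (Z : Ω → Fin N → ℝ) (hZmeas : Measurable Z)
    (hZlaw : IsCenteredGaussianCov (Measure.map Z P) (vstar • Sig))
    (η : ℝ) (hη : 0 < η) :
    (P {ω | (⨆ j, Z ω j) < (∫ ω', (⨆ j, Z ω' j) ∂P) - η}).toReal ≤
      Real.exp (-η ^ 2 / (2 * vstar)) := by
  obtain ⟨A, hAA, hlaw⟩ := hZlaw
  have : NeZero N := ⟨by omega⟩
  unfold _root_.stdGaussian at hlaw
  set γ := Measure.pi fun _ : Fin N => gaussianReal 0 1 with hγ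
  set X : (Fin N → ℝ) → ℝ := fun x => -(⨆ j, A.mulVec x j) with hX
  have hrow : ∀ j, ∑ i, A j i ^ 2 ≤ vstar := fun j => by
    have h1 := congrFun (congrFun hAA j) j
    simp only [Matrix.mul_apply, Matrix.transpose_apply, Matrix.smul_apply, smul_eq_mul] at h1
    simp only [sq, h1]
    nlinarith [hdiag j]
  have hXexp : ∀ t, Integrable (fun x => Real.exp (t * X x)) γ :=
    integrable_exp_mul_iSup_mulVec A
  have hmax : Measurable fun z : Fin N → ℝ => ⨆ j, z j :=
    Measurable.iSup fun j => measurable_pi_apply j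
  have hAm : Measurable fun x : Fin N → ℝ => A.mulVec x := by
    refine measurable_pi_iff.2 fun j => ?_
    simp only [Matrix.mulVec, dotProduct]
    fun_prop
  have hmean : ∫ ω, (⨆ j, Z ω j) ∂P = -∫ x, X x ∂γ := by
    rw [← integral_map (f := fun z : Fin N → ℝ => ⨆ j, z j) hZmeas.aemeasurable
      hmax.aestronglyMeasurable, hlaw, integral_map hAm.aemeasurable hmax.aestronglyMeasurable,
      ← integral_neg]
    simp [hX]
  set m := ∫ x, X x ∂γ with hm
  have hset : P {ω | (⨆ j, Z ω j) < -m - η} = γ {x | m + η < X x} := by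
    have hS : MeasurableSet {z : Fin N → ℝ | (⨆ j, z j) < -m - η} :=
      measurableSet_lt hmax measurable_const
    have h1 := Measure.map_apply (μ := P) hZmeas hS
    rw [hlaw, Measure.map_apply hAm hS] at h1
    refine h1.symm.trans (congrArg γ ?_)
    ext x
    simp only [Set.mem_preimage, Set.mem_ofPred_eq, hX]
    constructor <;> intro h <;> linarith
  rw [hmean, hset]
  -- `η / vstar` minimises the Chernoff exponent `-s * η + s ^ 2 * vstar / 2`.
  have hs : 0 ≤ η / vstar := by positivity
  have hcgf := cgf_le_of_halving γ X vstar hXexp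
    (fun s hs => mgf_neg_iSup_le_sq A vstar hrow hs) hs
  calc (γ {x | m + η < X x}).toReal ≤ γ.real {x | m + η ≤ X x} :=
        measureReal_mono fun x (hx : m + η < X x) => (hx.le : m + η ≤ X x)
    _ ≤ Real.exp (-(η / vstar) * (m + η) + cgf X γ (η / vstar)) :=
        measure_ge_le_exp_cgf _ hs (hXexp _)
    _ ≤ Real.exp (-η ^ 2 / (2 * vstar)) := by
        refine Real.exp_le_exp.2 ?_
        have : -(η / vstar) * (m + η) + (η / vstar * m + (η / vstar) ^ 2 * vstar / 2)
            = -η ^ 2 / (2 * vstar) := by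
          field_simp
          ring
        linarith
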